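/- arXiv:2502.12313 — 3 statements merged into one kernel-verified Lean document; each statement's English description precedes it below -/
import Mathlib

section
/- Let F be a monotone hazard rate probability distribution supported on the non-negative reals with density f and strictly increasing virtual valuation φ. Then A_F + V_F ≤ ((4e+2)/5)·R^1_F, where R^1_F = ∫₀^∞ (φ⁻¹(z)·(1−F(φ⁻¹(z))) + F(φ⁻¹(z))·R*_F)·f(z) dz. In particular, the robustness of the optimal prediction-ignoring mechanism is at most (4e+2)/5 ≈ 2.575. -/
open MeasureTheory Real Set

/-!
A posted price `ψ z = φ⁻¹(z)` sells with probability `G = 𝔼[1 - F (ψ z)]` and earns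
`P = 𝔼[ψ z * (1 - F (ψ z))]`. With `r = ψ 0` and `q = 1 - F r`, the benchmark is at most `P + V_F`,
the mechanism `M₁` earns exactly `P + r * q * (1 - G)`, and `P ≥ r * G` because `ψ ≥ r`.
A monotone hazard rate makes `log (1 - F)` concave, and its tangent lines give everything else:
the tangent at `r`, of slope `-1 / r`, yields `V_F ≤ r * (2 + log q)`, and the tangent at `ψ z`, of
slope `-1 / (ψ z - z)`, yields `1 - F z ≤ e * (1 - F (ψ z))`, so that `1 / (2 * e) ≤ G ≤ 1 / 2`.
What remains, `2 + log q ≤ c * q + (c - 1 - c * q) * G`, is affine in `G`; at the two endpoints it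
follows from `log x ≤ x - 1` for every `c ≥ 2.54`, the endpoint `1 / 2` being the binding one.
-/

/-! ### Real-variable inequalities -/

lemma le_tangentLine_of_concaveOn {s : Set ℝ} {g : ℝ → ℝ} {g' w z : ℝ} (hg : ConcaveOn ℝ s g)
    (hw : w ∈ s) (hz : z ∈ s) (hderiv : HasDerivAt g g' w) : g z ≤ g w + g' * (z - w) := by
  rcases lt_trichotomy z w with hzw | rfl | hwz
  · have hslope := hg.le_slope_of_hasDerivAt hz hw hzw hderiv
    rw [slope_def_field, le_div_iff₀ (sub_pos.2 hzw)] at hslope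
    linarith
  · simp
  · have hslope := hg.slope_le_of_hasDerivAt hw hz hwz hderiv
    rw [slope_def_field, div_le_iff₀ (sub_pos.2 hwz)] at hslope
    linarith

lemma integrableOn_exp_sub_mul_Ioi {k : ℝ} (hk : 0 < k) (a b : ℝ) :
    IntegrableOn (fun z => exp (a - k * z)) (Ioi b) := by
  simp_rw [sub_eq_add_neg, exp_add, ← neg_mul]
  exact (integrableOn_exp_mul_Ioi (neg_neg_of_pos hk) b).const_mul _

lemma integral_exp_sub_mul_Ioi {k : ℝ} (hk : 0 < k) (a b : ℝ) :
    ∫ z in Ioi b, exp (a - k * z) = exp (a - k * b) / k := by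
  simp_rw [sub_eq_add_neg, exp_add, ← neg_mul]
  rw [integral_const_mul, integral_exp_mul_Ioi (neg_neg_of_pos hk), neg_div_neg_eq, mul_div_assoc]

-- The two bounds cross at `z = a / k`, where the integral is split.
lemma integral_Ioi_le_of_le_one_of_le_exp {g : ℝ → ℝ} {a k : ℝ} (ha : 0 ≤ a) (hk : 0 < k)
    (hg : IntegrableOn g (Ioi 0)) (hone : ∀ z, 0 ≤ z → g z ≤ 1)
    (hexp : ∀ z, 0 ≤ z → g z ≤ exp (a - k * z)) :
    ∫ z in Ioi (0 : ℝ), g z ≤ (a + 1) / k := by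
  have hs : 0 ≤ a / k := by positivity
  have hg_tail : IntegrableOn g (Ioi (a / k)) := hg.mono_set (Ioi_subset_Ioi hs)
  have hhead : ∫ z in (0 : ℝ)..a / k, g z ≤ ∫ _ in (0 : ℝ)..a / k, (1 : ℝ) :=
    intervalIntegral.integral_mono_on hs
      ((intervalIntegrable_iff_integrableOn_Ioc_of_le hs).2 (hg.mono_set Ioc_subset_Ioi_self))
      intervalIntegrable_const fun z hz => hone z hz.1
  have htail : ∫ z in Ioi (a / k), g z ≤ ∫ z in Ioi (a / k), exp (a - k * z) :=
    setIntegral_mono_on hg_tail (integrableOn_exp_sub_mul_Ioi hk a _) measurableSet_Ioi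
      fun z hz => hexp z (hs.trans (le_of_lt hz))
  calc ∫ z in Ioi (0 : ℝ), g z
      = (∫ z in (0 : ℝ)..a / k, g z) + ∫ z in Ioi (a / k), g z :=
        (intervalIntegral.integral_interval_add_Ioi hg hg_tail).symm
    _ ≤ (∫ _ in (0 : ℝ)..a / k, (1 : ℝ)) + ∫ z in Ioi (a / k), exp (a - k * z) :=
        add_le_add hhead htail
    _ = (a + 1) / k := by
        rw [integral_exp_sub_mul_Ioi hk, mul_div_cancel₀ a hk.ne', sub_self, exp_zero,
          intervalIntegral.integral_const, smul_eq_mul]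
        ring

lemma log_le_mul_sub_one_sub_log {q t : ℝ} (hq : 0 < q) (ht : 0 < t) :
    log q ≤ t * q - 1 - log t := by
  have hlog := log_le_sub_one_of_pos (mul_pos ht hq)
  rw [log_mul ht.ne' hq.ne'] at hlog
  linarith

lemma one_le_log_add_at_half {c : ℝ} (hc : 2.54 ≤ c) :
    1 ≤ log (c * (1 - 1 / 2)) + (c - 1) * (1 / 2) := by
  have hlog : log 2 ≤ 3 * log 1.27 :=
    calc log 2 ≤ log (1.27 ^ 3) := log_le_log (by norm_num) (by norm_num)
      _ = 3 * log 1.27 := by simp only [log_pow, Nat.cast_ofNat]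
  have hmono : log 1.27 ≤ log (c * (1 - 1 / 2)) := log_le_log (by norm_num) (by linarith)
  linarith [log_two_gt_d9]

lemma one_le_log_add_at_one_div_two_mul_exp {c : ℝ} (hc : 2.54 ≤ c) :
    1 ≤ log (c * (1 - 1 / (2 * exp 1))) + (c - 1) * (1 / (2 * exp 1)) := by
  have hlow : 0.1839 ≤ 1 / (2 * exp 1) := by
    rw [le_div_iff₀ (by positivity)]
    linarith [exp_one_lt_d9]
  have hupp : 1 / (2 * exp 1) ≤ 0.184 := by
    rw [div_le_iff₀ (by positivity)]
    linarith [exp_one_gt_d9]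
  have hlog : 0.72 ≤ log 2.07 := by
    have htwo : log 2.07 = log 2 + log 1.035 := by
      rw [← log_mul (by norm_num) (by norm_num)]
      norm_num
    linarith [log_two_gt_d9, one_sub_inv_le_log_of_pos (show (0 : ℝ) < 1.035 by norm_num)]
  have hmono : log 2.07 ≤ log (c * (1 - 1 / (2 * exp 1))) :=
    log_le_log (by norm_num) (by nlinarith)
  nlinarith

lemma two_add_log_le {c q G : ℝ} (hc : 2.54 ≤ c) (hq : 0 < q) (hG : 1 / (2 * exp 1) ≤ G)
    (hG' : G ≤ 1 / 2) : 2 + log q ≤ c * q + (c - 1 - c * q) * G := by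
  have of_one_le : ∀ x < 1, 1 ≤ log (c * (1 - x)) + (c - 1) * x →
      2 + log q ≤ c * q + (c - 1 - c * q) * x := fun x hx hone => by
    have := log_le_mul_sub_one_sub_log hq (mul_pos (by linarith : 0 < c) (sub_pos.2 hx))
    linarith
  rcases le_total 0 (c - 1 - c * q) with hsign | hsign
  · calc 2 + log q ≤ c * q + (c - 1 - c * q) * (1 / (2 * exp 1)) :=
          of_one_le _ (by linarith) (one_le_log_add_at_one_div_two_mul_exp hc)
      _ ≤ c * q + (c - 1 - c * q) * G := by gcongr
  · calc 2 + log q ≤ c * q + (c - 1 - c * q) * (1 / 2) :=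
          of_one_le _ (by norm_num) (one_le_log_add_at_half hc)
      _ ≤ c * q + (c - 1 - c * q) * G :=
          add_le_add_right (mul_le_mul_of_nonpos_left hG' hsign) _

/-! ### Positive densities on the half-line -/

/-- `f` is a continuous, strictly positive probability density on `[0, ∞)` and `F` is its cumulative
distribution function. Values at negative arguments are unconstrained. -/
structure IsPositiveDensity (f F : ℝ → ℝ) : Prop where
  continuousOn : ContinuousOn f (Ici 0)
  pos : ∀ z, 0 ≤ z → 0 < f z
  cdf_eq : ∀ z, 0 ≤ z → F z = ∫ t in (0 : ℝ)..z, f t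
  integral_eq_one : ∫ z in Ioi (0 : ℝ), f z = 1

/-- The hazard rate of the distribution with density `f` and cumulative distribution function `F`;
the distribution is MHR when this is monotone on `[0, ∞)`. -/
noncomputable def hazardRate (f F : ℝ → ℝ) (z : ℝ) : ℝ := f z / (1 - F z)

namespace IsPositiveDensity

variable {f F : ℝ → ℝ} (hf : IsPositiveDensity f F)
include hf

lemma integrableOn : IntegrableOn f (Ioi 0) :=
  .of_integral_ne_zero (by rw [hf.integral_eq_one]; exact one_ne_zero)

lemma intervalIntegrable {z : ℝ} (hz : 0 ≤ z) : IntervalIntegrable f volume 0 z :=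
  (hf.continuousOn.mono Icc_subset_Ici_self).intervalIntegrable_of_Icc hz

lemma cdf_zero : F 0 = 0 := by
  rw [hf.cdf_eq 0 le_rfl, intervalIntegral.integral_same]

lemma hasDerivAt_cdf {z : ℝ} (hz : 0 < z) : HasDerivAt F (f z) z := by
  have hcont : ContinuousAt f z := hf.continuousOn.continuousAt (Ici_mem_nhds hz)
  have hmeas : StronglyMeasurableAtFilter f (nhds z) :=
    (hf.continuousOn.mono Ioi_subset_Ici_self).stronglyMeasurableAtFilter isOpen_Ioi z hz
  refine (intervalIntegral.integral_hasDerivAt_right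
    (hf.intervalIntegrable hz.le) hmeas hcont).congr_of_eventuallyEq ?_
  filter_upwards [Ioi_mem_nhds hz] with x hx using hf.cdf_eq x (le_of_lt hx)

lemma continuousOn_cdf : ContinuousOn F (Ici 0) := by
  have hprim : ContinuousWithinAt F (Ici 0) 0 := by
    have hIcc := intervalIntegral.continuousOn_primitive_interval'
      (hf.intervalIntegrable zero_le_one) left_mem_uIcc
    rw [uIcc_of_le zero_le_one] at hIcc
    refine ((hIcc.congr fun z hz => hf.cdf_eq z hz.1) 0 (by simp)).mono_of_mem_nhdsWithin ?_
    exact Icc_mem_nhdsGE zero_lt_one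
  intro z hz
  rcases eq_or_lt_of_le (mem_Ici.1 hz) with rfl | hpos
  · exact hprim
  · exact (hf.hasDerivAt_cdf hpos).continuousAt.continuousWithinAt

lemma strictMonoOn_cdf : StrictMonoOn F (Ici 0) := by
  refine strictMonoOn_of_deriv_pos (convex_Ici 0) hf.continuousOn_cdf fun z hz => ?_
  rw [interior_Ici] at hz
  rw [(hf.hasDerivAt_cdf hz).deriv]
  exact hf.pos z (le_of_lt hz)

lemma tendsto_cdf : Filter.Tendsto F Filter.atTop (nhds 1) := by
  have hlim := intervalIntegral_tendsto_integral_Ioi 0 hf.integrableOn Filter.tendsto_id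
  rw [hf.integral_eq_one] at hlim
  refine hlim.congr' ?_
  filter_upwards [Filter.eventually_ge_atTop 0] with z hz using (hf.cdf_eq z hz).symm

lemma cdf_nonneg {z : ℝ} (hz : 0 ≤ z) : 0 ≤ F z :=
  hf.cdf_zero ▸ hf.strictMonoOn_cdf.monotoneOn self_mem_Ici hz hz

lemma cdf_lt_one {z : ℝ} (hz : 0 ≤ z) : F z < 1 := by
  have hz' : 0 ≤ z + 1 := by linarith
  refine (hf.strictMonoOn_cdf hz hz' (lt_add_one z)).trans_le (ge_of_tendsto hf.tendsto_cdf ?_)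
  filter_upwards [Filter.eventually_ge_atTop (z + 1)] with x hx
  exact hf.strictMonoOn_cdf.monotoneOn hz' (hz'.trans hx) hx

lemma hazardRate_pos {z : ℝ} (hz : 0 ≤ z) : 0 < hazardRate f F z :=
  div_pos (hf.pos z hz) (sub_pos.2 (hf.cdf_lt_one hz))

lemma integrableOn_mul_density {u : ℝ → ℝ}
    (hu : AEStronglyMeasurable u (volume.restrict (Ioi 0)))
    (hu01 : ∀ z, 0 ≤ z → u z ∈ Icc 0 1) : IntegrableOn (fun z => u z * f z) (Ioi 0) := by
  refine Integrable.bdd_mul (c := 1) hf.integrableOn hu ?_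
  filter_upwards [ae_restrict_mem measurableSet_Ioi] with z hz
  obtain ⟨hu0, hu1⟩ := hu01 z (le_of_lt hz)
  rwa [norm_of_nonneg hu0]

lemma integrableOn_one_sub_cdf_mul : IntegrableOn (fun z => (1 - F z) * f z) (Ioi 0) :=
  hf.integrableOn_mul_density
    ((continuousOn_const.sub (hf.continuousOn_cdf.mono Ioi_subset_Ici_self)).aestronglyMeasurable
      measurableSet_Ioi)
    fun _ hz => ⟨(sub_pos.2 (hf.cdf_lt_one hz)).le, sub_le_self 1 (hf.cdf_nonneg hz)⟩

lemma integral_one_sub_cdf_mul : ∫ z in Ioi (0 : ℝ), (1 - F z) * f z = 1 / 2 := by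
  have hderiv : ∀ z ∈ Ioi (0 : ℝ), HasDerivAt (fun z => F z - F z ^ 2 / 2) ((1 - F z) * f z) z := by
    intro z hz
    have hF := hf.hasDerivAt_cdf hz
    refine (hF.sub ((hF.pow 2).div_const 2)).congr_deriv ?_
    push_cast
    ring
  have hcont := hf.continuousOn_cdf 0 self_mem_Ici
  calc ∫ z in Ioi (0 : ℝ), (1 - F z) * f z = (1 - 1 ^ 2 / 2) - (F 0 - F 0 ^ 2 / 2) :=
        integral_Ioi_of_hasDerivAt_of_tendsto (hcont.sub ((hcont.pow 2).div_const 2)) hderiv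
          hf.integrableOn_one_sub_cdf_mul
          (hf.tendsto_cdf.sub ((hf.tendsto_cdf.pow 2).div_const 2))
    _ = 1 / 2 := by
        rw [hf.cdf_zero]
        norm_num

lemma intervalIntegral_id_mul_density {b : ℝ} (hb : 0 ≤ b) :
    ∫ z in (0 : ℝ)..b, z * f z = (∫ z in (0 : ℝ)..b, (1 - F z)) - b * (1 - F b) := by
  have hcont : ContinuousOn (fun z => F z - 1) (uIcc 0 b) :=
    (hf.continuousOn_cdf.mono (uIcc_of_le hb ▸ Icc_subset_Ici_self)).sub continuousOn_const
  have hparts := intervalIntegral.integral_mul_deriv_eq_deriv_mul_of_hasDerivAt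
    continuousOn_id hcont (fun z _ => hasDerivAt_id z)
    (fun z hz => (hf.hasDerivAt_cdf (by simpa [hb] using hz.1)).sub_const 1)
    intervalIntegrable_const (hf.intervalIntegrable hb)
  simp only [id, one_mul, zero_mul, sub_zero] at hparts
  rw [hparts, ← neg_sub (1 : ℝ) (F b), ← neg_neg (∫ z in (0 : ℝ)..b, (F z - 1)),
    ← intervalIntegral.integral_neg]
  simp only [neg_sub]
  ring

lemma integral_id_mul_density_le (hmean : IntegrableOn (fun z => z * f z) (Ioi 0))
    (hsurv : IntegrableOn (fun z => 1 - F z) (Ioi 0)) :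
    ∫ z in Ioi (0 : ℝ), z * f z ≤ ∫ z in Ioi (0 : ℝ), (1 - F z) := by
  refine le_of_tendsto (intervalIntegral_tendsto_integral_Ioi 0 hmean Filter.tendsto_id) ?_
  filter_upwards [Filter.eventually_ge_atTop 0] with b hb
  have hnonneg : ∀ z, 0 ≤ z → 0 ≤ 1 - F z := fun z hz => (sub_pos.2 (hf.cdf_lt_one hz)).le
  calc ∫ z in (0 : ℝ)..b, z * f z
      = (∫ z in (0 : ℝ)..b, (1 - F z)) - b * (1 - F b) := hf.intervalIntegral_id_mul_density hb
    _ ≤ ∫ z in (0 : ℝ)..b, (1 - F z) := sub_le_self _ (mul_nonneg hb (hnonneg b hb))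
    _ = ∫ z in Ioc 0 b, (1 - F z) := intervalIntegral.integral_of_le hb
    _ ≤ ∫ z in Ioi (0 : ℝ), (1 - F z) :=
        setIntegral_mono_set hsurv
          ((ae_restrict_mem measurableSet_Ioi).mono fun z hz => hnonneg z (le_of_lt hz))
          Ioc_subset_Ioi_self.eventuallyLE

/-! ### Monotone hazard rate -/

lemma hasDerivAt_log_one_sub_cdf {z : ℝ} (hz : 0 < z) :
    HasDerivAt (fun z => log (1 - F z)) (-hazardRate f F z) z := by
  rw [hazardRate, ← neg_div]
  exact ((hf.hasDerivAt_cdf hz).const_sub 1).log (sub_pos.2 (hf.cdf_lt_one hz.le)).ne'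

variable (hmhr : MonotoneOn (hazardRate f F) (Ici 0))
include hmhr

lemma concaveOn_log_one_sub_cdf : ConcaveOn ℝ (Ici 0) fun z => log (1 - F z) := by
  refine AntitoneOn.concaveOn_of_deriv (convex_Ici 0)
    ((continuousOn_const.sub hf.continuousOn_cdf).log
      fun z hz => (sub_pos.2 (hf.cdf_lt_one hz)).ne') ?_ ?_
  · rw [interior_Ici]
    exact fun z hz =>
      (hf.hasDerivAt_log_one_sub_cdf hz).differentiableAt.differentiableWithinAt
  · rw [interior_Ici]
    intro y hy z hz hyz
    rw [(hf.hasDerivAt_log_one_sub_cdf hy).deriv, (hf.hasDerivAt_log_one_sub_cdf hz).deriv]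
    exact neg_le_neg (hmhr (Ioi_subset_Ici_self hy) (Ioi_subset_Ici_self hz) hyz)

lemma log_one_sub_cdf_le {w z : ℝ} (hw : 0 < w) (hz : 0 ≤ z) :
    log (1 - F z) ≤ log (1 - F w) + (w - z) * hazardRate f F w := by
  have htangent := le_tangentLine_of_concaveOn (hf.concaveOn_log_one_sub_cdf hmhr)
    hw.le hz (hf.hasDerivAt_log_one_sub_cdf hw)
  linarith

lemma one_sub_cdf_le_exp {w z : ℝ} (hw : 0 < w) (hz : 0 ≤ z) :
    1 - F z ≤ exp (log (1 - F w) + w * hazardRate f F w - hazardRate f F w * z) := by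
  rw [← log_le_iff_le_exp (sub_pos.2 (hf.cdf_lt_one hz))]
  linarith [hf.log_one_sub_cdf_le hmhr hw hz]

lemma integrableOn_one_sub_cdf : IntegrableOn (fun z => 1 - F z) (Ioi 0) := by
  refine Integrable.mono'
    (integrableOn_exp_sub_mul_Ioi (hf.hazardRate_pos zero_le_one)
      (log (1 - F 1) + 1 * hazardRate f F 1) 0)
    ((continuousOn_const.sub (hf.continuousOn_cdf.mono Ioi_subset_Ici_self)).aestronglyMeasurable
      measurableSet_Ioi) ?_
  filter_upwards [ae_restrict_mem measurableSet_Ioi] with z hz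
  rw [norm_of_nonneg (sub_pos.2 (hf.cdf_lt_one (le_of_lt hz))).le]
  exact hf.one_sub_cdf_le_exp hmhr one_pos (le_of_lt hz)

lemma mean_le {w : ℝ} (hw : 0 < w) (hmean : IntegrableOn (fun z => z * f z) (Ioi 0)) :
    ∫ z in Ioi (0 : ℝ), z * f z ≤ w + (1 + log (1 - F w)) / hazardRate f F w := by
  have hhaz := hf.hazardRate_pos hw.le
  have hintercept : 0 ≤ log (1 - F w) + w * hazardRate f F w := by
    simpa [hf.cdf_zero] using hf.log_one_sub_cdf_le hmhr hw le_rfl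
  calc ∫ z in Ioi (0 : ℝ), z * f z
      ≤ ∫ z in Ioi (0 : ℝ), (1 - F z) :=
        hf.integral_id_mul_density_le hmean (hf.integrableOn_one_sub_cdf hmhr)
    _ ≤ (log (1 - F w) + w * hazardRate f F w + 1) / hazardRate f F w :=
        integral_Ioi_le_of_le_one_of_le_exp hintercept hhaz (hf.integrableOn_one_sub_cdf hmhr)
          (fun _ hz => sub_le_self 1 (hf.cdf_nonneg hz))
          (fun _ hz => hf.one_sub_cdf_le_exp hmhr hw hz)
    _ = w + (1 + log (1 - F w)) / hazardRate f F w := by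
        field_simp
        ring

end IsPositiveDensity

/-! ### Virtual values and posted prices -/

/-- Myerson's virtual valuation `φ` of the distribution with density `f` and cumulative
distribution function `F`. -/
noncomputable def virtualValue (f F : ℝ → ℝ) (z : ℝ) : ℝ := z - (1 - F z) / f z

/-- `ψ` is the inverse `φ⁻¹` of the virtual valuation on `[0, ∞)`. In the auction, `ψ z` is the
price posted to one bidder when the other has value `z`, and `ψ 0` is the monopoly reserve price. -/
structure IsVirtualValueInverse (f F ψ : ℝ → ℝ) : Prop where
  nonneg : ∀ z, 0 ≤ z → 0 ≤ ψ z
  virtualValue_eq : ∀ z, 0 ≤ z → virtualValue f F (ψ z) = z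

/-- The probability that a value drawn from `F` accepts the price `ψ z`, where `z` is an independent
draw with density `f`. -/
noncomputable def saleProbability (f F ψ : ℝ → ℝ) : ℝ :=
  ∫ z in Ioi (0 : ℝ), (1 - F (ψ z)) * f z

/-- The expected revenue of posting the price `ψ z` to a value drawn from `F`, where `z` is an
independent draw with density `f`. -/
noncomputable def saleRevenue (f F ψ : ℝ → ℝ) : ℝ :=
  ∫ z in Ioi (0 : ℝ), ψ z * (1 - F (ψ z)) * f z

namespace IsVirtualValueInverse

variable {f F ψ : ℝ → ℝ} (hψ : IsVirtualValueInverse f F ψ)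
include hψ

lemma apply_sub_self_eq_inv {z : ℝ} (hz : 0 ≤ z) : ψ z - z = (hazardRate f F (ψ z))⁻¹ := by
  have hz' := hψ.virtualValue_eq z hz
  rw [virtualValue] at hz'
  rw [hazardRate, inv_div]
  linarith

variable (hf : IsPositiveDensity f F)
include hf

lemma self_lt_apply {z : ℝ} (hz : 0 ≤ z) : z < ψ z := by
  rw [← sub_pos, hψ.apply_sub_self_eq_inv hz]
  exact inv_pos.2 (hf.hazardRate_pos (hψ.nonneg z hz))

lemma one_sub_cdf_pos {z : ℝ} (hz : 0 ≤ z) : 0 < 1 - F (ψ z) :=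
  sub_pos.2 (hf.cdf_lt_one (hψ.nonneg z hz))

variable (hmhr : MonotoneOn (hazardRate f F) (Ici 0))
include hmhr

lemma monotoneOn : MonotoneOn ψ (Ici 0) := by
  intro y hy z hz hyz
  by_contra! hlt
  have hinv := inv_anti₀ (hf.hazardRate_pos (hψ.nonneg z hz))
    (hmhr (hψ.nonneg z hz) (hψ.nonneg y hy) hlt.le)
  rw [← hψ.apply_sub_self_eq_inv hy, ← hψ.apply_sub_self_eq_inv hz] at hinv
  linarith

lemma le_add_reserve {z : ℝ} (hz : 0 ≤ z) : ψ z ≤ z + ψ 0 := by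
  have hinv := inv_anti₀ (hf.hazardRate_pos (hψ.nonneg 0 le_rfl))
    (hmhr (hψ.nonneg 0 le_rfl) (hψ.nonneg z hz) (hψ.monotoneOn hf hmhr self_mem_Ici hz hz))
  rw [← hψ.apply_sub_self_eq_inv hz, ← hψ.apply_sub_self_eq_inv le_rfl] at hinv
  linarith

lemma aestronglyMeasurable_one_sub_cdf :
    AEStronglyMeasurable (fun z => 1 - F (ψ z)) (volume.restrict (Ioi 0)) := by
  refine (aemeasurable_restrict_of_antitoneOn measurableSet_Ioi ?_).aestronglyMeasurable
  intro y hy z hz hyz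
  exact sub_le_sub_left (hf.strictMonoOn_cdf.monotoneOn (hψ.nonneg y (le_of_lt hy))
    (hψ.nonneg z (le_of_lt hz))
    (hψ.monotoneOn hf hmhr (Ioi_subset_Ici_self hy) (Ioi_subset_Ici_self hz) hyz)) 1

lemma integrableOn_saleProbability : IntegrableOn (fun z => (1 - F (ψ z)) * f z) (Ioi 0) :=
  hf.integrableOn_mul_density (hψ.aestronglyMeasurable_one_sub_cdf hf hmhr) fun z hz =>
    ⟨(hψ.one_sub_cdf_pos hf hz).le, sub_le_self 1 (hf.cdf_nonneg (hψ.nonneg z hz))⟩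

lemma integrableOn_saleRevenue (hmean : IntegrableOn (fun z => z * f z) (Ioi 0)) :
    IntegrableOn (fun z => ψ z * (1 - F (ψ z)) * f z) (Ioi 0) := by
  have hψ_meas : AEStronglyMeasurable ψ (volume.restrict (Ioi 0)) :=
    (aemeasurable_restrict_of_monotoneOn measurableSet_Ioi
      ((hψ.monotoneOn hf hmhr).mono Ioi_subset_Ici_self)).aestronglyMeasurable
  refine Integrable.mono' (hmean.add (hf.integrableOn.const_mul (ψ 0)))
    ((hψ_meas.mul (hψ.aestronglyMeasurable_one_sub_cdf hf hmhr)).mul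
      hf.integrableOn.aestronglyMeasurable) ?_
  filter_upwards [ae_restrict_mem measurableSet_Ioi] with z hz
  have hz : 0 ≤ z := le_of_lt hz
  have hprice := hψ.nonneg z hz
  have hsurv := hψ.one_sub_cdf_pos hf hz
  have hdens := hf.pos z hz
  rw [norm_of_nonneg (by positivity)]
  calc ψ z * (1 - F (ψ z)) * f z
      ≤ ψ z * f z := by
        gcongr
        exact mul_le_of_le_one_right hprice (sub_le_self 1 (hf.cdf_nonneg hprice))
    _ ≤ (z + ψ 0) * f z := by
        gcongr
        exact hψ.le_add_reserve hf hmhr hz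
    _ = z * f z + ψ 0 * f z := add_mul _ _ _

lemma saleProbability_le_half : saleProbability f F ψ ≤ 1 / 2 := by
  rw [saleProbability, ← hf.integral_one_sub_cdf_mul]
  refine setIntegral_mono_on (hψ.integrableOn_saleProbability hf hmhr)
    hf.integrableOn_one_sub_cdf_mul measurableSet_Ioi fun z hz => ?_
  have hz : 0 ≤ z := le_of_lt hz
  have hdens := hf.pos z hz
  gcongr
  exact hf.strictMonoOn_cdf.monotoneOn hz (hψ.nonneg z hz) (hψ.self_lt_apply hf hz).le

lemma one_sub_cdf_le_exp_one_mul {z : ℝ} (hz : 0 ≤ z) :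
    1 - F z ≤ exp 1 * (1 - F (ψ z)) := by
  have hsurv := hψ.one_sub_cdf_pos hf hz
  have hlog := hf.log_one_sub_cdf_le hmhr (hz.trans_lt (hψ.self_lt_apply hf hz)) hz
  rw [hψ.apply_sub_self_eq_inv hz, inv_mul_cancel₀ (hf.hazardRate_pos (hψ.nonneg z hz)).ne'] at hlog
  rw [← log_le_log_iff (sub_pos.2 (hf.cdf_lt_one hz)) (by positivity),
    log_mul (exp_ne_zero 1) hsurv.ne', log_exp]
  linarith

lemma one_div_two_mul_exp_le_saleProbability :
    1 / (2 * exp 1) ≤ saleProbability f F ψ := by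
  have hmul : 1 / 2 ≤ exp 1 * saleProbability f F ψ := by
    rw [saleProbability, ← hf.integral_one_sub_cdf_mul, ← integral_const_mul]
    refine setIntegral_mono_on hf.integrableOn_one_sub_cdf_mul
      ((hψ.integrableOn_saleProbability hf hmhr).const_mul _) measurableSet_Ioi fun z hz => ?_
    rw [← mul_assoc]
    exact mul_le_mul_of_nonneg_right (hψ.one_sub_cdf_le_exp_one_mul hf hmhr (le_of_lt hz))
      (hf.pos z (le_of_lt hz)).le
  rw [div_le_iff₀ (by positivity)]
  linarith

variable (hmean : IntegrableOn (fun z => z * f z) (Ioi 0))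
include hmean

lemma mean_le_reserve_mul :
    ∫ z in Ioi (0 : ℝ), z * f z ≤ ψ 0 * (2 + log (1 - F (ψ 0))) := by
  have hmean_le := hf.mean_le hmhr (hψ.self_lt_apply hf le_rfl) hmean
  rw [div_eq_mul_inv, ← hψ.apply_sub_self_eq_inv le_rfl] at hmean_le
  linarith

lemma reserve_mul_saleProbability_le_saleRevenue :
    ψ 0 * saleProbability f F ψ ≤ saleRevenue f F ψ := by
  rw [saleProbability, saleRevenue, ← integral_const_mul]
  refine setIntegral_mono_on ((hψ.integrableOn_saleProbability hf hmhr).const_mul _)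
    (hψ.integrableOn_saleRevenue hf hmhr hmean) measurableSet_Ioi fun z hz => ?_
  have hz : 0 ≤ z := le_of_lt hz
  have hsurv := hψ.one_sub_cdf_pos hf hz
  have hdens := hf.pos z hz
  rw [← mul_assoc]
  gcongr
  exact hψ.monotoneOn hf hmhr self_mem_Ici hz hz

lemma integral_apply_sub_self_mul_le_saleRevenue :
    ∫ z in Ioi (0 : ℝ), (ψ z - z) * (1 - F (ψ z)) * f z ≤ saleRevenue f F ψ := by
  refine integral_mono_of_nonneg ?_ (hψ.integrableOn_saleRevenue hf hmhr hmean) ?_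
  all_goals
    filter_upwards [ae_restrict_mem measurableSet_Ioi] with z hz
    have hz : 0 ≤ z := le_of_lt hz
    have hsurv := hψ.one_sub_cdf_pos hf hz
    have hdens := hf.pos z hz
  · have hmarkup := sub_pos.2 (hψ.self_lt_apply hf hz)
    simp only [Pi.zero_apply]
    positivity
  · gcongr
    exact sub_le_self _ hz

lemma integral_saleRevenue_add_cdf_mul (R : ℝ) :
    ∫ z in Ioi (0 : ℝ), (ψ z * (1 - F (ψ z)) + F (ψ z) * R) * f z
      = saleRevenue f F ψ + R * (1 - saleProbability f F ψ) := by
  have hprob := hψ.integrableOn_saleProbability hf hmhr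
  have hreject : IntegrableOn (fun z => R * (f z - (1 - F (ψ z)) * f z)) (Ioi 0) :=
    (hf.integrableOn.sub hprob).const_mul R
  calc ∫ z in Ioi (0 : ℝ), (ψ z * (1 - F (ψ z)) + F (ψ z) * R) * f z
      = ∫ z in Ioi (0 : ℝ), (ψ z * (1 - F (ψ z)) * f z + R * (f z - (1 - F (ψ z)) * f z)) := by
        congr 1 with z
        ring
    _ = saleRevenue f F ψ + R * (1 - saleProbability f F ψ) := by
        rw [integral_add (hψ.integrableOn_saleRevenue hf hmhr hmean) hreject,
          integral_const_mul, integral_sub hf.integrableOn hprob, hf.integral_eq_one,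
          saleRevenue, saleProbability]

end IsVirtualValueInverse

/-- Sharpens the constant `(4 * e + 2) / 5 ≈ 2.575` to `2.54`. -/
theorem stmt_10_general
    (f F : ℝ → ℝ)
    (hf_cont : ContinuousOn f (Ici 0))
    (hf_pos : ∀ z ∈ Ici (0 : ℝ), 0 < f z)
    (hF : ∀ z ∈ Ici (0 : ℝ), F z = ∫ t in (0 : ℝ)..z, f t)
    (hprob : ∫ z in Ioi (0 : ℝ), f z = 1)
    (hMHR : ∀ y z : ℝ, 0 ≤ y → y ≤ z → f y / (1 - F y) ≤ f z / (1 - F z))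
    (φ ψ : ℝ → ℝ)
    (hφ : ∀ z ∈ Ici (0 : ℝ), φ z = z - (1 - F z) / f z)
    (hψ : ∀ y ∈ Ici (0 : ℝ), ψ y ∈ Ici (0 : ℝ) ∧ φ (ψ y) = y)
    (hmean : IntegrableOn (fun z => z * f z) (Ioi 0))
    {c : ℝ} (hc : 2.54 ≤ c) :
    (∫ z in Ioi (0 : ℝ), (ψ z - z) * (1 - F (ψ z)) * f z) + (∫ z in Ioi (0 : ℝ), z * f z)
      ≤ c * ∫ z in Ioi (0 : ℝ),
          (ψ z * (1 - F (ψ z)) + F (ψ z) * (ψ 0 * (1 - F (ψ 0)))) * f z := by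
  have hf : IsPositiveDensity f F := ⟨hf_cont, hf_pos, hF, hprob⟩
  have hmhr : MonotoneOn (hazardRate f F) (Ici 0) := fun y hy z _ hyz => hMHR y z hy hyz
  have hinv : IsVirtualValueInverse f F ψ := ⟨fun z hz => (hψ z hz).1, fun z hz => by
    rw [virtualValue, ← hφ _ (hψ z hz).1, (hψ z hz).2]⟩
  have hA := hinv.integral_apply_sub_self_mul_le_saleRevenue hf hmhr hmean
  have hV := hinv.mean_le_reserve_mul hf hmhr hmean
  have hP := hinv.reserve_mul_saleProbability_le_saleRevenue hf hmhr hmean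
  have hratio := two_add_log_le hc (hinv.one_sub_cdf_pos hf le_rfl)
    (hinv.one_div_two_mul_exp_le_saleProbability hf hmhr) (hinv.saleProbability_le_half hf hmhr)
  rw [hinv.integral_saleRevenue_add_cdf_mul hf hmhr hmean]
  have hreserve := mul_le_mul_of_nonneg_left hratio (hinv.nonneg 0 le_rfl)
  have hslack := mul_le_mul_of_nonneg_left hP (by linarith : 0 ≤ c - 1)
  linarith

theorem stmt_10
(f F : ℝ → ℝ)
    (hf_cont : ContinuousOn f (Ici 0))
    (hf_pos : ∀ z ∈ Ici (0:ℝ), 0 < f z)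
    (hF : ∀ z ∈ Ici (0:ℝ), F z = ∫ t in (0:ℝ)..z, f t)
    (hF_lt : ∀ z ∈ Ici (0:ℝ), F z < 1)
    (hprob : ∫ z in Ioi (0:ℝ), f z = 1)
(hMHR : ∀ y z : ℝ, 0 ≤ y → y ≤ z → f y / (1 - F y) ≤ f z / (1 - F z))
(φ ψ : ℝ → ℝ)
    (hφ : ∀ z ∈ Ici (0:ℝ), φ z = z - (1 - F z) / f z)
    (hφ_mono : StrictMonoOn φ (Ici 0))
    (hφ_top : Filter.Tendsto φ Filter.atTop Filter.atTop)
    (hψ : ∀ y ∈ Ici (0:ℝ), ψ y ∈ Ici (0:ℝ) ∧ φ (ψ y) = y)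
(hmean : IntegrableOn (fun z => z * f z) (Ioi 0)) :
    (∫ z in Ioi (0:ℝ), (ψ z - z) * (1 - F (ψ z)) * f z) + (∫ z in Ioi (0:ℝ), z * f z)
      ≤ ((4 * Real.exp 1 + 2) / 5) *
          ∫ z in Ioi (0:ℝ), (ψ z * (1 - F (ψ z)) + F (ψ z) * (ψ 0 * (1 - F (ψ 0)))) * f z :=
  stmt_10_general f F hf_cont hf_pos hF hprob hMHR φ ψ hφ hψ hmean (by linarith [exp_one_gt_d9])
end

section
/- Let F be a monotone hazard rate probability distribution supported on the non-negative reals with density f and strictly increasing virtual valuation φ. Then R^2_F := ∫₀^∞ (z·(1−F(z)) + F(z)·R*_F)·f(z) dz satisfies R^2_F = Q_F + R*_F/2 ≥ (1/4 + 1/(2e))·V_F. -/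
open MeasureTheory Real Set

/-!
Write `S = 1 - F`. A monotone hazard rate `f / S` says exactly that `log S` is concave, and each of
the two bounds is one inequality for a concave function. The chord from `0` to `2 * x` lies below
the graph, so `S (2 * x) ≤ S x ^ 2`; integrating, `V / 2 ≤ ∫ S ^ 2 = 2 Q`, hence `Q ≥ V / 4`. The
tangent at the monopoly price `r`, where `r * f r = S r`, lies above the graph, so
`S x ≤ exp 1 * S r * exp (-x / r)`; integrating, `V ≤ exp 1 * (r * S r)`. The formulas `V = ∫ S` and
`2 Q = ∫ S ^ 2` come from integration by parts, where the boundary term vanishes because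
`x * S x ≤ ∫ t in Ioi x, t * f t`. Since `F z` is uniform on `[0, 1]` for a sample `z`, the second
agent is reached with probability `1 / 2`.
-/

section LogConcave

variable {D : Set ℝ} {S f : ℝ → ℝ}

theorem concaveOn_log_of_monotoneOn_hazard (hD : Convex ℝ D) (hcont : ContinuousOn S D)
    (hpos : ∀ x ∈ D, 0 < S x) (hderiv : ∀ x ∈ interior D, HasDerivAt S (-f x) x)
    (hmono : MonotoneOn (fun x ↦ f x / S x) (interior D)) :
    ConcaveOn ℝ D fun x ↦ log (S x) := by
  have hlog : ∀ x ∈ interior D, HasDerivAt (fun x ↦ log (S x)) (-(f x / S x)) x := fun x hx ↦ by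
    simpa only [neg_div] using (hderiv x hx).log (hpos x (interior_subset hx)).ne'
  refine AntitoneOn.concaveOn_of_deriv hD (hcont.log fun x hx ↦ (hpos x hx).ne')
    (fun x hx ↦ (hlog x hx).differentiableAt.differentiableWithinAt) ?_
  exact hmono.neg.congr fun x hx ↦ (hlog x hx).deriv.symm

theorem mul_le_sq_midpoint_of_concaveOn_log (hlog : ConcaveOn ℝ D fun x ↦ log (S x))
    (hpos : ∀ x ∈ D, 0 < S x) {x y : ℝ} (hx : x ∈ D) (hy : y ∈ D) :
    S x * S y ≤ S (2⁻¹ * x + 2⁻¹ * y) ^ 2 := by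
  have hmid : 2⁻¹ * x + 2⁻¹ * y ∈ D := hlog.1 hx hy (by norm_num) (by norm_num) (by norm_num)
  have hconc : 2⁻¹ * log (S x) + 2⁻¹ * log (S y) ≤ log (S (2⁻¹ * x + 2⁻¹ * y)) :=
    hlog.2 hx hy (by norm_num) (by norm_num) (by norm_num)
  have hSx := hpos x hx
  have hSy := hpos y hy
  rw [← log_le_log_iff (mul_pos hSx hSy) (pow_pos (hpos _ hmid) 2), log_mul hSx.ne' hSy.ne',
    log_pow]
  push_cast
  linarith

theorem le_tangent_of_concaveOn {g : ℝ → ℝ} {g' r x : ℝ} (hg : ConcaveOn ℝ D g) (hr : r ∈ D)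
    (hx : x ∈ D) (hderiv : HasDerivAt g g' r) : g x ≤ g r + g' * (x - r) := by
  rcases lt_trichotomy x r with hxr | rfl | hrx
  · have hslope := hg.le_slope_of_hasDerivAt hx hr hxr hderiv
    rw [slope_def_field, le_div_iff₀ (sub_pos.2 hxr)] at hslope
    linarith
  · simp
  · have hslope := hg.slope_le_of_hasDerivAt hr hx hrx hderiv
    rw [slope_def_field, div_le_iff₀ (sub_pos.2 hrx)] at hslope
    linarith

theorem le_mul_exp_of_concaveOn_log {S' r x : ℝ} (hlog : ConcaveOn ℝ D fun x ↦ log (S x))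
    (hpos : ∀ x ∈ D, 0 < S x) (hr : r ∈ D) (hx : x ∈ D) (hderiv : HasDerivAt S S' r) :
    S x ≤ S r * exp (S' / S r * (x - r)) := by
  have htangent := le_tangent_of_concaveOn hlog hr hx (hderiv.log (hpos r hr).ne')
  calc S x = exp (log (S x)) := (exp_log (hpos x hx)).symm
    _ ≤ exp (log (S r) + S' / S r * (x - r)) := exp_le_exp.2 htangent
    _ = S r * exp (S' / S r * (x - r)) := by rw [exp_add, exp_log (hpos r hr)]

theorem integral_Ioi_le_two_mul_integral_sq_of_concaveOn_log
    (hlog : ConcaveOn ℝ (Ici 0) fun x ↦ log (S x)) (hpos : ∀ x ∈ Ici 0, 0 < S x)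
    (hint : IntegrableOn (fun x ↦ S x ^ 2) (Ioi 0)) :
    S 0 * ∫ x in Ioi 0, S x ≤ 2 * ∫ x in Ioi 0, S x ^ 2 := by
  have h_mem {x : ℝ} (hx : x ∈ Ioi 0) : 2 * x ∈ Ici 0 := mul_nonneg zero_le_two (mem_Ioi.1 hx).le
  have hdouble : ∀ x ∈ Ioi 0, S 0 * S (2 * x) ≤ S x ^ 2 := fun x hx ↦ by
    have hmid := mul_le_sq_midpoint_of_concaveOn_log hlog hpos self_mem_Ici (h_mem hx)
    rwa [mul_zero, zero_add, inv_mul_cancel_left₀ two_ne_zero] at hmid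
  calc S 0 * ∫ x in Ioi 0, S x = 2 * ∫ x in Ioi 0, S 0 * S (2 * x) := by
        rw [integral_const_mul, integral_comp_mul_left_Ioi S 0 two_pos, mul_zero, smul_eq_mul,
          mul_left_comm, mul_inv_cancel_left₀ two_ne_zero]
    _ ≤ 2 * ∫ x in Ioi 0, S x ^ 2 := by
        refine mul_le_mul_of_nonneg_left (integral_mono_of_nonneg ?_ hint ?_) zero_le_two
        all_goals filter_upwards [ae_restrict_mem measurableSet_Ioi] with x hx
        exacts [mul_nonneg (hpos 0 self_mem_Ici).le (hpos _ (h_mem hx)).le, hdouble x hx]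

theorem integral_Ioi_le_exp_one_mul_of_concaveOn_log {r : ℝ}
    (hlog : ConcaveOn ℝ (Ici 0) fun x ↦ log (S x)) (hpos : ∀ x ∈ Ici 0, 0 < S x) (hr : 0 < r)
    (hderiv : HasDerivAt S (-(S r / r)) r) :
    ∫ x in Ioi 0, S x ≤ exp 1 * (r * S r) := by
  have hSr : 0 < S r := hpos r hr.le
  have htangent : ∀ x ∈ Ioi (0 : ℝ), S x ≤ exp 1 * S r * exp (-r⁻¹ * x) := fun x hx ↦ by
    convert le_mul_exp_of_concaveOn_log hlog hpos hr.le (mem_Ioi.1 hx).le hderiv using 1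
    rw [show -(S r / r) / S r * (x - r) = 1 + -r⁻¹ * x by field_simp; ring, exp_add]
    ring
  have hrate : -r⁻¹ < 0 := neg_lt_zero.2 (inv_pos.2 hr)
  calc ∫ x in Ioi 0, S x ≤ ∫ x in Ioi 0, exp 1 * S r * exp (-r⁻¹ * x) := by
        refine integral_mono_of_nonneg ?_ ((integrableOn_exp_mul_Ioi hrate 0).const_mul _) ?_
        all_goals filter_upwards [ae_restrict_mem measurableSet_Ioi] with x hx
        exacts [(hpos x (mem_Ioi.1 hx).le).le, htangent x hx]
    _ = exp 1 * (r * S r) := by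
        rw [integral_const_mul, integral_exp_mul_Ioi hrate, mul_zero, exp_zero]
        field_simp

end LogConcave

section TailIntegral

open Filter Topology

variable {S f : ℝ → ℝ} (hcont : ContinuousOn S (Ici 0))
  (hderiv : ∀ x ∈ Ioi 0, HasDerivAt S (-f x) x) (hf : ∀ x ∈ Ioi 0, 0 ≤ f x)
  (hlim : Tendsto S atTop (𝓝 0)) (hint : IntegrableOn (fun x ↦ x * f x) (Ioi 0))

include hderiv hf hlim

theorem integral_Ioi_eq_tail {x : ℝ} (hx : 0 < x) : ∫ t in Ioi x, f t = S x := by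
  have hsub : Ioi x ⊆ Ioi 0 := Ioi_subset_Ioi hx.le
  have hftc := integral_Ioi_of_hasDerivAt_of_nonpos (hderiv x hx).continuousAt.continuousWithinAt
    (fun t ht ↦ hderiv t (hsub ht)) (fun t ht ↦ neg_nonpos.2 (hf t (hsub ht))) hlim
  rwa [integral_neg, zero_sub, neg_inj] at hftc

theorem tail_nonneg {x : ℝ} (hx : 0 < x) : 0 ≤ S x := by
  rw [← integral_Ioi_eq_tail hderiv hf hlim hx]
  exact setIntegral_nonneg measurableSet_Ioi fun t ht ↦ hf t (hx.trans ht)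

include hint

theorem tendsto_id_mul_zero_of_integrableOn_id_mul_deriv :
    Tendsto (fun x ↦ x * S x) atTop (𝓝 0) := by
  have hbound : ∀ x, 0 < x → x * S x ≤ ∫ t in Ioi x, t * f t := fun x hx ↦ by
    have hsub : Ioi x ⊆ Ioi 0 := Ioi_subset_Ioi hx.le
    rw [← integral_Ioi_eq_tail hderiv hf hlim hx, ← integral_const_mul]
    refine integral_mono_of_nonneg ?_ (hint.mono_set hsub) ?_
    all_goals filter_upwards [ae_restrict_mem measurableSet_Ioi] with t ht
    exacts [mul_nonneg hx.le (hf t (hsub ht)),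
      mul_le_mul_of_nonneg_right (mem_Ioi.1 ht).le (hf t (hsub ht))]
  refine squeeze_zero' (g := fun x ↦ ∫ t in Ioi x, t * f t) ?_ ?_
    (tendsto_integral_Ioi_zero tendsto_id)
  all_goals filter_upwards [eventually_gt_atTop 0] with x hx
  exacts [mul_nonneg hx.le (tail_nonneg hderiv hf hlim hx), hbound x hx]

include hcont

theorem tendsto_intervalIntegral_of_integrableOn_id_mul_deriv :
    Tendsto (fun b ↦ ∫ x in (0)..b, S x) atTop (𝓝 (∫ x in Ioi 0, x * f x)) := by
  have hparts : ∀ b, 0 ≤ b → b * S b + ∫ x in (0)..b, x * f x = ∫ x in (0)..b, S x := fun b hb ↦ by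
    have hS : IntervalIntegrable S volume 0 b :=
      (hcont.mono Icc_subset_Ici_self).intervalIntegrable_of_Icc hb
    have hxf : IntervalIntegrable (fun x ↦ x * f x) volume 0 b :=
      (intervalIntegrable_iff_integrableOn_Ioc_of_le hb).2 (hint.mono_set Ioc_subset_Ioi_self)
    have hftc := intervalIntegral.integral_eq_sub_of_hasDerivAt_of_le hb
      (f := fun x ↦ x * S x) (f' := fun x ↦ S x - x * f x)
      ((continuousOn_id.mul hcont).mono Icc_subset_Ici_self)
      (fun x hx ↦ ((hasDerivAt_id x).mul (hderiv x hx.1)).congr_deriv (by simp [sub_eq_add_neg]))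
      (hS.sub hxf)
    rw [intervalIntegral.integral_sub hS hxf] at hftc
    linarith
  have hlim_parts := (tendsto_id_mul_zero_of_integrableOn_id_mul_deriv hderiv hf hlim hint).add
    (intervalIntegral_tendsto_integral_Ioi 0 hint tendsto_id)
  rw [zero_add] at hlim_parts
  refine hlim_parts.congr' ?_
  filter_upwards [eventually_ge_atTop 0] with b hb using hparts b hb

theorem integrableOn_Ioi_of_integrableOn_id_mul_deriv : IntegrableOn S (Ioi 0) := by
  refine integrableOn_Ioi_of_intervalIntegral_norm_tendsto _ 0 (b := id) (fun b ↦ ?_) tendsto_id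
    ((tendsto_intervalIntegral_of_integrableOn_id_mul_deriv hcont hderiv hf hlim hint).congr' ?_)
  · exact ((hcont.mono Icc_subset_Ici_self).integrableOn_Icc).mono_set Ioc_subset_Icc_self
  · filter_upwards [eventually_ge_atTop 0] with b hb
    refine intervalIntegral.integral_congr_ae (ae_of_all _ fun x hx ↦ ?_)
    rw [uIoc_of_le hb] at hx
    exact (norm_of_nonneg (tail_nonneg hderiv hf hlim hx.1)).symm

theorem integral_Ioi_id_mul_eq_integral_tail : ∫ x in Ioi 0, x * f x = ∫ x in Ioi 0, S x :=
  tendsto_nhds_unique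
    (tendsto_intervalIntegral_of_integrableOn_id_mul_deriv hcont hderiv hf hlim hint)
    (intervalIntegral_tendsto_integral_Ioi 0
      (integrableOn_Ioi_of_integrableOn_id_mul_deriv hcont hderiv hf hlim hint) tendsto_id)

end TailIntegral

theorem hasDerivWithinAt_integral_Ici {E : Type*} [NormedAddCommGroup E] [NormedSpace ℝ E]
    [CompleteSpace E] {f : ℝ → E} {a x : ℝ} (hf : ContinuousOn f (Ici a)) (hx : x ∈ Ici a) :
    HasDerivWithinAt (fun y ↦ ∫ t in a..y, f t) (f x) (Ici a) x := by
  have hext : Continuous fun t ↦ f (max a t) :=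
    hf.comp_continuous (by fun_prop) fun t ↦ le_max_left a t
  have hderiv := (hext.integral_hasStrictDerivAt a x).hasDerivAt.hasDerivWithinAt (s := Ici a)
  rw [max_eq_right hx] at hderiv
  refine hderiv.congr_of_mem (fun y hy ↦ ?_) hx
  refine intervalIntegral.integral_congr fun t ht ↦ ?_
  rw [uIcc_of_le hy] at ht
  simp only [max_eq_right ht.1]

/-- `F` is the cumulative distribution function of a probability law on `[0, ∞)` with continuous
density `f` and unbounded support. Only the values of `f` and `F` on `[0, ∞)` are constrained. -/
structure IsCDFWithDensity (F f : ℝ → ℝ) : Prop where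
  continuousOn_density : ContinuousOn f (Ici 0)
  density_nonneg : ∀ x ∈ Ici 0, 0 ≤ f x
  eq_integral : ∀ x ∈ Ici 0, F x = ∫ t in (0)..x, f t
  lt_one : ∀ x ∈ Ici 0, F x < 1
  integral_density : ∫ x in Ioi 0, f x = 1

namespace IsCDFWithDensity

open Filter Topology

variable {F f : ℝ → ℝ} (hF : IsCDFWithDensity F f)

include hF

theorem hasDerivWithinAt {x : ℝ} (hx : x ∈ Ici 0) : HasDerivWithinAt F (f x) (Ici 0) x :=
  (hasDerivWithinAt_integral_Ici hF.continuousOn_density hx).congr_of_mem hF.eq_integral hx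

theorem continuousOn : ContinuousOn F (Ici 0) := fun _ hx ↦
  (hF.hasDerivWithinAt hx).continuousWithinAt

theorem hasDerivAt {x : ℝ} (hx : 0 < x) : HasDerivAt F (f x) x :=
  (hF.hasDerivWithinAt hx.le).hasDerivAt (Ici_mem_nhds hx)

theorem map_zero : F 0 = 0 := by
  rw [hF.eq_integral 0 self_mem_Ici, intervalIntegral.integral_same]

theorem nonneg {x : ℝ} (hx : x ∈ Ici 0) : 0 ≤ F x := by
  rw [hF.eq_integral x hx]
  exact intervalIntegral.integral_nonneg hx fun t ht ↦ hF.density_nonneg t ht.1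

theorem norm_le_one {x : ℝ} (hx : x ∈ Ici 0) : ‖F x‖ ≤ 1 := by
  rw [norm_of_nonneg (hF.nonneg hx)]
  exact (hF.lt_one x hx).le

theorem norm_survival_le_one {x : ℝ} (hx : x ∈ Ici 0) : ‖1 - F x‖ ≤ 1 := by
  rw [norm_of_nonneg (sub_pos.2 (hF.lt_one x hx)).le]
  exact sub_le_self 1 (hF.nonneg hx)

theorem integrableOn_density : IntegrableOn f (Ioi 0) :=
  integrable_of_integral_eq_one hF.integral_density

theorem tendsto_one : Tendsto F atTop (𝓝 1) := by
  rw [← hF.integral_density]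
  refine (intervalIntegral_tendsto_integral_Ioi 0 hF.integrableOn_density tendsto_id).congr' ?_
  filter_upwards [eventually_ge_atTop 0] with x hx using (hF.eq_integral x hx).symm

theorem tendsto_survival_zero : Tendsto (fun x ↦ 1 - F x) atTop (𝓝 0) := by
  simpa only [sub_self] using hF.tendsto_one.const_sub 1

theorem aestronglyMeasurable : AEStronglyMeasurable F (volume.restrict (Ioi 0)) :=
  (hF.continuousOn.mono Ioi_subset_Ici_self).aestronglyMeasurable measurableSet_Ioi

theorem integrableOn_mul_density : IntegrableOn (fun x ↦ F x * f x) (Ioi 0) := by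
  refine hF.integrableOn_density.bdd_mul hF.aestronglyMeasurable (c := 1) ?_
  filter_upwards [ae_restrict_mem measurableSet_Ioi] with x hx
  exact hF.norm_le_one (mem_Ioi.1 hx).le

theorem integral_mul_density : ∫ x in Ioi 0, F x * f x = 1 / 2 := by
  have hftc := integral_Ioi_of_hasDerivAt_of_tendsto (f := fun x ↦ F x ^ 2)
    ((hF.continuousOn.pow 2) 0 self_mem_Ici)
    (fun x hx ↦ ((hF.hasDerivAt hx).pow 2).congr_deriv (g' := 2 * (F x * f x)) (by ring))
    (hF.integrableOn_mul_density.const_mul 2) (hF.tendsto_one.pow 2)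
  rw [integral_const_mul, hF.map_zero] at hftc
  linarith

theorem concaveOn_log_survival (hmono : MonotoneOn (fun x ↦ f x / (1 - F x)) (Ici 0)) :
    ConcaveOn ℝ (Ici 0) fun x ↦ log (1 - F x) := by
  refine concaveOn_log_of_monotoneOn_hazard (convex_Ici 0) (continuousOn_const.sub hF.continuousOn)
    (fun x hx ↦ sub_pos.2 (hF.lt_one x hx)) (fun x hx ↦ ?_) (hmono.mono interior_subset)
  rw [interior_Ici] at hx
  exact (hF.hasDerivAt hx).const_sub 1

section FiniteMean

variable (hmean : IntegrableOn (fun x ↦ x * f x) (Ioi 0))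

include hmean

theorem integral_id_mul_density : ∫ x in Ioi 0, x * f x = ∫ x in Ioi 0, (1 - F x) :=
  integral_Ioi_id_mul_eq_integral_tail (continuousOn_const.sub hF.continuousOn)
    (fun _ hx ↦ (hF.hasDerivAt hx).const_sub 1) (fun x hx ↦ hF.density_nonneg x (mem_Ioi.1 hx).le)
    hF.tendsto_survival_zero hmean

theorem integrableOn_id_mul_survival_mul_density :
    IntegrableOn (fun x ↦ x * (1 - F x) * f x) (Ioi 0) := by
  have hbdd : IntegrableOn (fun x ↦ (1 - F x) * (x * f x)) (Ioi 0) := by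
    refine hmean.bdd_mul (aestronglyMeasurable_const.sub hF.aestronglyMeasurable) (c := 1) ?_
    filter_upwards [ae_restrict_mem measurableSet_Ioi] with x hx
    exact hF.norm_survival_le_one (mem_Ioi.1 hx).le
  exact hbdd.congr_fun (fun x _ ↦ by ring) measurableSet_Ioi

theorem integral_id_mul_density_le_four_mul_integral_survival
    (hlog : ConcaveOn ℝ (Ici 0) fun x ↦ log (1 - F x)) :
    ∫ x in Ioi 0, x * f x ≤ 4 * ∫ x in Ioi 0, x * (1 - F x) * f x := by
  have hpos : ∀ x ∈ Ici 0, 0 < 1 - F x := fun x hx ↦ sub_pos.2 (hF.lt_one x hx)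
  have hcont : ContinuousOn (fun x ↦ (1 - F x) ^ 2) (Ici 0) :=
    (continuousOn_const.sub hF.continuousOn).pow 2
  have hderiv : ∀ x ∈ Ioi 0, HasDerivAt (fun x ↦ (1 - F x) ^ 2) (-(2 * (1 - F x) * f x)) x :=
    fun x hx ↦ (((hF.hasDerivAt hx).const_sub 1).pow 2).congr_deriv (by ring)
  have hnonneg : ∀ x ∈ Ioi 0, 0 ≤ 2 * (1 - F x) * f x := fun x hx ↦
    mul_nonneg (mul_nonneg zero_le_two (hpos x (mem_Ioi.1 hx).le).le)
      (hF.density_nonneg x (mem_Ioi.1 hx).le)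
  have hlim : Tendsto (fun x ↦ (1 - F x) ^ 2) atTop (𝓝 0) := by
    simpa using hF.tendsto_survival_zero.pow 2
  have hrw : ∀ x, x * (2 * (1 - F x) * f x) = 2 * (x * (1 - F x) * f x) := fun x ↦ by ring
  have hint : IntegrableOn (fun x ↦ x * (2 * (1 - F x) * f x)) (Ioi 0) := by
    simp only [hrw]
    exact (hF.integrableOn_id_mul_survival_mul_density hmean).const_mul 2
  have hint_sq := integrableOn_Ioi_of_integrableOn_id_mul_deriv hcont hderiv hnonneg hlim hint
  calc ∫ x in Ioi 0, x * f x = (1 - F 0) * ∫ x in Ioi 0, (1 - F x) := by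
        rw [hF.integral_id_mul_density hmean, hF.map_zero, sub_zero, one_mul]
    _ ≤ 2 * ∫ x in Ioi 0, (1 - F x) ^ 2 :=
        integral_Ioi_le_two_mul_integral_sq_of_concaveOn_log hlog hpos hint_sq
    _ = 2 * ∫ x in Ioi 0, x * (2 * (1 - F x) * f x) := by
        rw [integral_Ioi_id_mul_eq_integral_tail hcont hderiv hnonneg hlim hint]
    _ = 4 * ∫ x in Ioi 0, x * (1 - F x) * f x := by
        simp only [hrw, integral_const_mul]
        ring

theorem integral_id_mul_density_le_exp_one_mul_revenue {r : ℝ}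
    (hlog : ConcaveOn ℝ (Ici 0) fun x ↦ log (1 - F x)) (hr : r ∈ Ici 0)
    (hcrit : r * f r = 1 - F r) :
    ∫ x in Ioi 0, x * f x ≤ exp 1 * (r * (1 - F r)) := by
  have hpos : ∀ x ∈ Ici 0, 0 < 1 - F x := fun x hx ↦ sub_pos.2 (hF.lt_one x hx)
  have hr_pos : 0 < r := pos_of_mul_pos_left (hcrit ▸ hpos r hr) (hF.density_nonneg r hr)
  have hderiv : HasDerivAt (fun x ↦ 1 - F x) (-((1 - F r) / r)) r := by
    rw [← hcrit, mul_div_cancel_left₀ _ hr_pos.ne']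
    exact (hF.hasDerivAt hr_pos).const_sub 1
  rw [hF.integral_id_mul_density hmean]
  exact integral_Ioi_le_exp_one_mul_of_concaveOn_log hlog hpos hr_pos hderiv

theorem integral_sample_price_revenue (R : ℝ) :
    ∫ x in Ioi 0, (x * (1 - F x) + F x * R) * f x =
      (∫ x in Ioi 0, x * (1 - F x) * f x) + R / 2 := by
  have hsplit : ∀ x, (x * (1 - F x) + F x * R) * f x = x * (1 - F x) * f x + R * (F x * f x) :=
    fun x ↦ by ring
  simp only [hsplit]
  rw [integral_add (hF.integrableOn_id_mul_survival_mul_density hmean)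
    (hF.integrableOn_mul_density.const_mul R), integral_const_mul, hF.integral_mul_density]
  ring

end FiniteMean

end IsCDFWithDensity

theorem stmt_12
(f F : ℝ → ℝ)
    (hf_cont : ContinuousOn f (Ici 0))
    (hf_pos : ∀ z ∈ Ici (0:ℝ), 0 < f z)
    (hF : ∀ z ∈ Ici (0:ℝ), F z = ∫ t in (0:ℝ)..z, f t)
    (hF_lt : ∀ z ∈ Ici (0:ℝ), F z < 1)
    (hprob : ∫ z in Ioi (0:ℝ), f z = 1)
(hMHR : ∀ y z : ℝ, 0 ≤ y → y ≤ z → f y / (1 - F y) ≤ f z / (1 - F z))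
(φ ψ : ℝ → ℝ)
    (hφ : ∀ z ∈ Ici (0:ℝ), φ z = z - (1 - F z) / f z)
    (hφ_mono : StrictMonoOn φ (Ici 0))
    (hφ_top : Filter.Tendsto φ Filter.atTop Filter.atTop)
    (hψ : ∀ y ∈ Ici (0:ℝ), ψ y ∈ Ici (0:ℝ) ∧ φ (ψ y) = y)
(hmean : IntegrableOn (fun z => z * f z) (Ioi 0)) :
    (∫ z in Ioi (0:ℝ), (z * (1 - F z) + F z * (ψ 0 * (1 - F (ψ 0)))) * f z)
      = (∫ z in Ioi (0:ℝ), z * (1 - F z) * f z) + (ψ 0 * (1 - F (ψ 0))) / 2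
    ∧ (∫ z in Ioi (0:ℝ), (z * (1 - F z) + F z * (ψ 0 * (1 - F (ψ 0)))) * f z)
      ≥ (1/4 + 1 / (2 * Real.exp 1)) * ∫ z in Ioi (0:ℝ), z * f z := by
  have hX : IsCDFWithDensity F f := ⟨hf_cont, fun z hz ↦ (hf_pos z hz).le, hF, hF_lt, hprob⟩
  have hlog := hX.concaveOn_log_survival fun y hy z _ hyz ↦ hMHR y z hy hyz
  obtain ⟨hr, hφr⟩ := hψ 0 self_mem_Ici
  have hcrit : ψ 0 * f (ψ 0) = 1 - F (ψ 0) := by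
    rwa [hφ _ hr, sub_eq_zero, eq_div_iff (hf_pos _ hr).ne'] at hφr
  have hQ := hX.integral_id_mul_density_le_four_mul_integral_survival hmean hlog
  have hR := hX.integral_id_mul_density_le_exp_one_mul_revenue hmean hlog hr hcrit
  have hrevenue := hX.integral_sample_price_revenue hmean (ψ 0 * (1 - F (ψ 0)))
  rw [← div_le_iff₀' (exp_pos 1)] at hR
  refine ⟨hrevenue, ?_⟩
  rw [hrevenue, ge_iff_le]
  calc (1 / 4 + 1 / (2 * exp 1)) * ∫ z in Ioi 0, z * f z
      = (∫ z in Ioi 0, z * f z) / 4 + (∫ z in Ioi 0, z * f z) / exp 1 / 2 := by field_simp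
    _ ≤ (∫ z in Ioi 0, z * (1 - F z) * f z) + ψ 0 * (1 - F (ψ 0)) / 2 := by linarith
end

section
/- Let λ > 0 and let F be the exponential distribution with F(z) = 1 − e^{−λz} and density f(z) = λe^{−λz} on [0,∞). Then the revenues of the optimal-consistency mechanism satisfy R^s_F = ∫₀^∞ φ⁻¹(z)·(1−F(φ⁻¹(z)))·f(z) dz = 3/(4λe) and R^h_F = ∫₀^∞ z·F(φ⁻¹(z))·f(z) dz = 1/λ − 1/(4λe); consequently (R^s_F + R^h_F)/R^s_F = (4e+2)/3 ≈ 4.291. -/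
/-!
The strategic bidder wins against an honest value `z` exactly when its own value exceeds
`φ⁻¹ z = z + 1/λ`, an event of probability `e⁻¹ e^{-λz}`. Against the density `λ e^{-λz}` both
revenues therefore reduce to the integrals of `e^{-bz}` and `z e^{-bz}` with `b = λ` or `b = 2λ`,
whose values are `1/b` and `1/b²`.
-/

open MeasureTheory Real Set

theorem exp_neg_mul_add_mul_exp_neg_mul (a b c z : ℝ) :
    exp (-(a * (z + c))) * exp (-(b * z)) = exp (-(a * c)) * exp (-((a + b) * z)) := by
  rw [← exp_add, ← exp_add]
  ring_nf

theorem integrableOn_pow_mul_exp_neg_mul_Ioi (n : ℕ) {b : ℝ} (hb : 0 < b) :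
    IntegrableOn (fun z : ℝ => z ^ n * exp (-(b * z))) (Ioi 0) := by
  have hn : (-1 : ℝ) < n := neg_one_lt_zero.trans_le n.cast_nonneg
  simpa only [rpow_natCast, rpow_one, neg_mul] using
    integrableOn_rpow_mul_exp_neg_mul_rpow hn one_pos hb

theorem integral_pow_mul_exp_neg_mul_Ioi (n : ℕ) {b : ℝ} (hb : 0 < b) :
    ∫ z in Ioi (0 : ℝ), z ^ n * exp (-(b * z)) = n.factorial / b ^ (n + 1) := by
  have hGamma := integral_rpow_mul_exp_neg_mul_Ioi (a := n + 1) (by positivity) hb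
  rw [Gamma_nat_eq_factorial, ← Nat.cast_succ, rpow_natCast] at hGamma
  simpa [div_eq_inv_mul] using hGamma

/-- The expected payment `R^s` of a strategic bidder with distribution function `F` facing an
honest bidder with density `f`. Here `ψ` is the inverse virtual valuation of the strategic bidder:
it wins against an honest value `z` with probability `1 - F (ψ z)` and then pays `ψ z`. -/
noncomputable def strategicRevenue (F f ψ : ℝ → ℝ) : ℝ :=
  ∫ z in Ioi (0 : ℝ), ψ z * (1 - F (ψ z)) * f z

/-- The expected payment `R^h` of an honest bidder with density `f` facing a strategic bidder with
distribution function `F` and inverse virtual valuation `ψ`: an honest value `z` wins with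
probability `F (ψ z)` and then pays `z`. -/
noncomputable def honestRevenue (F f ψ : ℝ → ℝ) : ℝ :=
  ∫ z in Ioi (0 : ℝ), z * F (ψ z) * f z

section Exponential

variable {a b c : ℝ} {F f ψ : ℝ → ℝ}

theorem strategicRevenue_of_exponential (hab : 0 < a + b) (hc : 0 ≤ c)
    (hF : ∀ z, 0 ≤ z → F z = 1 - exp (-(a * z)))
    (hf : ∀ z, 0 ≤ z → f z = b * exp (-(b * z)))
    (hψ : ∀ z, 0 ≤ z → ψ z = z + c) :
    strategicRevenue F f ψ = b * exp (-(a * c)) * (1 / (a + b) ^ 2 + c / (a + b)) := by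
  have integrand_eq : ∀ z ∈ Ioi (0 : ℝ), ψ z * (1 - F (ψ z)) * f z =
      b * exp (-(a * c)) *
        (z ^ 1 * exp (-((a + b) * z)) + c * (z ^ 0 * exp (-((a + b) * z)))) := by
    intro z (hz : 0 < z)
    rw [hψ z hz.le, hF _ (by positivity), hf z hz.le]
    linear_combination b * (z + c) * exp_neg_mul_add_mul_exp_neg_mul a b c z
  rw [strategicRevenue, setIntegral_congr_fun measurableSet_Ioi integrand_eq,
    integral_const_mul,
    integral_add (integrableOn_pow_mul_exp_neg_mul_Ioi 1 hab)
      ((integrableOn_pow_mul_exp_neg_mul_Ioi 0 hab).const_mul c),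
    integral_const_mul, integral_pow_mul_exp_neg_mul_Ioi 1 hab,
    integral_pow_mul_exp_neg_mul_Ioi 0 hab]
  simp [div_eq_mul_inv]

theorem honestRevenue_of_exponential (hb : 0 < b) (hab : 0 < a + b) (hc : 0 ≤ c)
    (hF : ∀ z, 0 ≤ z → F z = 1 - exp (-(a * z)))
    (hf : ∀ z, 0 ≤ z → f z = b * exp (-(b * z)))
    (hψ : ∀ z, 0 ≤ z → ψ z = z + c) :
    honestRevenue F f ψ = 1 / b - b * exp (-(a * c)) / (a + b) ^ 2 := by
  have integrand_eq : ∀ z ∈ Ioi (0 : ℝ), z * F (ψ z) * f z =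
      b * (z ^ 1 * exp (-(b * z))) -
        b * exp (-(a * c)) * (z ^ 1 * exp (-((a + b) * z))) := by
    intro z (hz : 0 < z)
    rw [hψ z hz.le, hF _ (by positivity), hf z hz.le]
    linear_combination -(b * z) * exp_neg_mul_add_mul_exp_neg_mul a b c z
  rw [honestRevenue, setIntegral_congr_fun measurableSet_Ioi integrand_eq,
    integral_sub ((integrableOn_pow_mul_exp_neg_mul_Ioi 1 hb).const_mul _)
      ((integrableOn_pow_mul_exp_neg_mul_Ioi 1 hab).const_mul _),
    integral_const_mul, integral_const_mul, integral_pow_mul_exp_neg_mul_Ioi 1 hb,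
    integral_pow_mul_exp_neg_mul_Ioi 1 hab, Nat.factorial_one, Nat.cast_one]
  field_simp

end Exponential

theorem stmt_15
    (l : ℝ) (hl : 0 < l)
    (F f φ ψ : ℝ → ℝ)
    (hF : ∀ z : ℝ, 0 ≤ z → F z = 1 - Real.exp (-(l * z)))
    (hf : ∀ z : ℝ, 0 ≤ z → f z = l * Real.exp (-(l * z)))
    (hφ : ∀ z : ℝ, 0 ≤ z → φ z = z - 1/l)
    (hψ : ∀ y : ℝ, 0 ≤ y → ψ y = y + 1/l) :
    (∫ z in Ioi (0:ℝ), ψ z * (1 - F (ψ z)) * f z) = 3 / (4 * l * Real.exp 1)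
    ∧ (∫ z in Ioi (0:ℝ), z * F (ψ z) * f z) = 1/l - 1 / (4 * l * Real.exp 1)
    ∧ ((∫ z in Ioi (0:ℝ), ψ z * (1 - F (ψ z)) * f z)
          + (∫ z in Ioi (0:ℝ), z * F (ψ z) * f z))
        / (∫ z in Ioi (0:ℝ), ψ z * (1 - F (ψ z)) * f z)
      = (4 * Real.exp 1 + 2) / 3 := by
  have hc : 0 ≤ 1 / l := by positivity
  have exp_shift : exp (-(l * (1 / l))) = 1 / exp 1 := by
    rw [mul_one_div_cancel hl.ne', exp_neg, one_div]
  have hs : strategicRevenue F f ψ = 3 / (4 * l * exp 1) := by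
    rw [strategicRevenue_of_exponential (by positivity) hc hF hf hψ, exp_shift]
    field_simp
    norm_num
  have hh : honestRevenue F f ψ = 1 / l - 1 / (4 * l * exp 1) := by
    rw [honestRevenue_of_exponential hl (by positivity) hc hF hf hψ, exp_shift]
    field_simp
    ring
  have hratio : (strategicRevenue F f ψ + honestRevenue F f ψ) / strategicRevenue F f ψ =
      (4 * exp 1 + 2) / 3 := by
    rw [hs, hh]
    field_simp
    ring
  exact ⟨hs, hh, hratio⟩
end
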